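/- Let 1 ≤ n ≤ N ≤ d, write μ̃_{[n:N]} = (μ̃_k)_{n≤k≤N} ∈ ℝ^{N−n+1}, ã_{[n:N]} = (ã_{kℓ})_{n≤k,ℓ≤N}, and set ν_{[n:N]} = (1−γ)·( r + (1/(2γ))·(μ̃_{[n:N]} − r·1)^⊤(ã_{[n:N]})^{−1}(μ̃_{[n:N]} − r·1) ) where 1 is the all-ones vector in ℝ^{N−n+1}; assume ν_{[n:N]} ≠ β. Define v(t,w) = f(t;ν_{[n:N]})^γ · w^{1−γ}/(1−γ) on [0,T]×(0,∞). Then v(T,w) = w^{1−γ}/(1−γ) for all w > 0, and for every (t,w) ∈ [0,T)×(0,∞): 0 = ∂_t v(t,w) + sup over (π,c) with π ∈ ℝ^d satisfying π_k = 0 for all k ∉ {n,…,N} and c ∈ (0,∞) of [ w·∂_w v(t,w)·(r + π^⊤(μ̃ − r·1_d)) + (w²/2)·∂_{ww}v(t,w)·π^⊤ã π − c·∂_w v(t,w) + e^{−βt}·c^{1−γ}/(1−γ) ]. Moreover this supremum is attained at the unique maximizer π* with (π*)_k = (1/γ)·((ã_{[n:N]})^{−1}(μ̃_{[n:N]} −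 r·1))_{k−n+1} for n ≤ k ≤ N and (π*)_k = 0 otherwise, together with c* = e^{−(β/γ)t}·w/f(t;ν_{[n:N]}). -/

import Mathlib

open Matrix

/-- The embedding of `{1,…,N−n+1}` into `{1,…,d}` sending `j` to rank `n−1+j`
(0-based: `j ↦ n−1+j`), used to extract the ranks `n,…,N`. -/
def rankEmb (d n N : ℕ) (hn : 1 ≤ n) (hnN : n ≤ N) (hNd : N ≤ d) :
    Fin (N - n + 1) → Fin d :=
  fun j => ⟨n - 1 + j.val, by have := j.isLt; omega⟩

/-!
On portfolios `π` supported in the tradable set, and because `w ∂_ww v = -γ ∂_w v`, the Hamiltonian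
splits into `w ∂_w v (r + π ⬝ m - (γ/2) π ⬝ A π)`, with `m` the vector of excess returns, and
`e^{-βt} U(c) - c ∂_w v`. The first part is maximized by completing the square in the tradable
coordinates; the second because the strictly concave function `e^{-βt} U` lies below its tangent
line at the point `c*` where its slope is `∂_w v`. The maximal value cancels `∂_t v` because `f`
solves the linear equation `f' = -(ν/γ) f - e^{-(β/γ)t}`.
-/

section Support

variable {ι κ R : Type*} [Fintype ι] [Fintype κ] [NonUnitalNonAssocSemiring R]
  {e : ι → κ} {x : κ → R}

lemma dotProduct_eq_comp_dotProduct_comp (he : Function.Injective e)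
    (hx : ∀ k ∉ Set.range e, x k = 0) (y : κ → R) : x ⬝ᵥ y = (x ∘ e) ⬝ᵥ (y ∘ e) :=
  (Fintype.sum_of_injective e he _ _ (fun k hk => by rw [hx k hk, zero_mul]) fun _ => rfl).symm

lemma mulVec_comp_eq_submatrix_mulVec_comp (he : Function.Injective e)
    (hx : ∀ k ∉ Set.range e, x k = 0) (A : Matrix κ κ R) :
    (A *ᵥ x) ∘ e = A.submatrix e e *ᵥ (x ∘ e) :=
  funext fun _ =>
    (Fintype.sum_of_injective e he _ _ (fun k hk => by rw [hx k hk, mul_zero]) fun _ => rfl).symm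

end Support

lemma eq_extend_zero {ι κ M : Type*} [Zero M] {e : ι → κ} (he : Function.Injective e) {x : κ → M}
    {y : ι → M} (hcomp : x ∘ e = y) (hx : ∀ k ∉ Set.range e, x k = 0) :
    x = Function.extend e y 0 := by
  funext k
  by_cases hk : k ∈ Set.range e
  · obtain ⟨j, rfl⟩ := hk
    rw [he.extend_apply, ← hcomp, Function.comp_apply]
  · rw [hx k hk, Function.extend_apply' _ _ _ hk, Pi.zero_apply]

lemma sub_inv_mulVec_dotProduct_mulVec_self {ι R : Type*} [Fintype ι] [DecidableEq ι] [CommRing R]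
    {A : Matrix ι ι R} (hsymm : A.IsSymm) (hdet : IsUnit A.det) (m y : ι → R) :
    (y - A⁻¹ *ᵥ m) ⬝ᵥ A *ᵥ (y - A⁻¹ *ᵥ m) =
      y ⬝ᵥ A *ᵥ y - 2 * (y ⬝ᵥ m) + m ⬝ᵥ A⁻¹ *ᵥ m := by
  have hinv : A *ᵥ A⁻¹ *ᵥ m = m := by
    rw [mulVec_mulVec, mul_nonsing_inv A hdet, one_mulVec]
  have hcross : (A⁻¹ *ᵥ m) ⬝ᵥ A *ᵥ y = y ⬝ᵥ m := by
    rw [dotProduct_mulVec, ← mulVec_transpose, hsymm.eq, hinv, dotProduct_comm]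
  rw [mulVec_sub, hinv, sub_dotProduct, dotProduct_sub, dotProduct_sub, hcross,
    dotProduct_comm (A⁻¹ *ᵥ m) m]
  ring

section Portfolio

variable {ι κ : Type*} [Fintype ι] [DecidableEq ι]

/-- The Merton portfolio `(1/γ) (A_e)⁻¹ m_e` of the sub-market indexed by `e`, extended by zero to
the assets outside the range of `e`. It maximizes `meanVariance` among the portfolios supported in
that range. -/
noncomputable def mertonPortfolio (γ : ℝ) (m : κ → ℝ) (A : Matrix κ κ ℝ) (e : ι → κ) : κ → ℝ :=
  Function.extend e ((1 / γ) • (A.submatrix e e)⁻¹ *ᵥ (m ∘ e)) 0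

lemma mertonPortfolio_apply_of_notMem_range {γ : ℝ} {m : κ → ℝ} {A : Matrix κ κ ℝ} {e : ι → κ}
    {k : κ} (hk : k ∉ Set.range e) : mertonPortfolio γ m A e k = 0 :=
  Function.extend_apply' _ _ _ hk

lemma mertonPortfolio_comp {e : ι → κ} (he : Function.Injective e) (γ : ℝ) (m : κ → ℝ)
    (A : Matrix κ κ ℝ) :
    mertonPortfolio γ m A e ∘ e = (1 / γ) • (A.submatrix e e)⁻¹ *ᵥ (m ∘ e) :=
  Function.extend_comp he _ _

/-- The mean-variance objective of the portfolio `π` with risk aversion `γ`, excess returns `m` and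
covariance matrix `A`: the part of the Hamiltonian that depends on the portfolio, per unit of
`w ∂_w v`. -/
noncomputable def meanVariance {κ : Type*} [Fintype κ] (γ : ℝ) (m : κ → ℝ) (A : Matrix κ κ ℝ)
    (π : κ → ℝ) : ℝ :=
  π ⬝ᵥ m - γ / 2 * (π ⬝ᵥ A *ᵥ π)

lemma meanVariance_eq_sub_sq {A : Matrix ι ι ℝ} (hsymm : A.IsSymm) (hdet : IsUnit A.det) {γ : ℝ}
    (hγ : γ ≠ 0) (m y : ι → ℝ) :
    meanVariance γ m A y = 1 / (2 * γ) * (m ⬝ᵥ A⁻¹ *ᵥ m) -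
      γ / 2 * ((y - (1 / γ) • A⁻¹ *ᵥ m) ⬝ᵥ A *ᵥ (y - (1 / γ) • A⁻¹ *ᵥ m)) := by
  rw [← mulVec_smul, sub_inv_mulVec_dotProduct_mulVec_self hsymm hdet, mulVec_smul]
  simp only [meanVariance, dotProduct_smul, smul_dotProduct, smul_eq_mul]
  field_simp
  ring

variable [Fintype κ] {γ : ℝ} {m : κ → ℝ} {A : Matrix κ κ ℝ} {e : ι → κ} {π : κ → ℝ}

lemma meanVariance_eq_sub_sq_of_support (hγ : γ ≠ 0) (he : Function.Injective e)
    (hA : (A.submatrix e e).PosDef) (hπ : ∀ k ∉ Set.range e, π k = 0) :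
    meanVariance γ m A π =
      1 / (2 * γ) * ((m ∘ e) ⬝ᵥ (A.submatrix e e)⁻¹ *ᵥ (m ∘ e)) -
        γ / 2 * ((π ∘ e - mertonPortfolio γ m A e ∘ e) ⬝ᵥ
          A.submatrix e e *ᵥ (π ∘ e - mertonPortfolio γ m A e ∘ e)) := by
  rw [mertonPortfolio_comp he, ← meanVariance_eq_sub_sq (isHermitian_iff_isSymm.1 hA.isHermitian)
    hA.det_pos.ne'.isUnit hγ, meanVariance, meanVariance,
    dotProduct_eq_comp_dotProduct_comp he hπ, dotProduct_eq_comp_dotProduct_comp he hπ,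
    mulVec_comp_eq_submatrix_mulVec_comp he hπ]

lemma meanVariance_mertonPortfolio (hγ : γ ≠ 0) (he : Function.Injective e)
    (hA : (A.submatrix e e).PosDef) :
    meanVariance γ m A (mertonPortfolio γ m A e) =
      1 / (2 * γ) * ((m ∘ e) ⬝ᵥ (A.submatrix e e)⁻¹ *ᵥ (m ∘ e)) := by
  rw [meanVariance_eq_sub_sq_of_support hγ he hA fun _ => mertonPortfolio_apply_of_notMem_range,
    sub_self, zero_dotProduct, mul_zero, sub_zero]

lemma meanVariance_lt_meanVariance_mertonPortfolio (hγ : 0 < γ) (he : Function.Injective e)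
    (hA : (A.submatrix e e).PosDef) (hπ : ∀ k ∉ Set.range e, π k = 0)
    (hne : π ≠ mertonPortfolio γ m A e) :
    meanVariance γ m A π < meanVariance γ m A (mertonPortfolio γ m A e) := by
  have hdiff : π ∘ e - mertonPortfolio γ m A e ∘ e ≠ 0 := sub_ne_zero.2 fun heq =>
    hne (eq_extend_zero he (heq.trans (mertonPortfolio_comp he γ m A)) hπ)
  have hquad := hA.dotProduct_mulVec_pos hdiff
  rw [star_trivial] at hquad
  rw [meanVariance_mertonPortfolio hγ.ne' he hA, meanVariance_eq_sub_sq_of_support hγ.ne' he hA hπ]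
  exact sub_lt_self _ (mul_pos (half_pos hγ) hquad)

lemma meanVariance_le_meanVariance_mertonPortfolio (hγ : 0 < γ) (he : Function.Injective e)
    (hA : (A.submatrix e e).PosDef) (hπ : ∀ k ∉ Set.range e, π k = 0) :
    meanVariance γ m A π ≤ meanVariance γ m A (mertonPortfolio γ m A e) := by
  by_cases heq : π = mertonPortfolio γ m A e
  · rw [heq]
  · exact (meanVariance_lt_meanVariance_mertonPortfolio hγ he hA hπ heq).le

end Portfolio

section PowerUtility

lemma lt_tangent_of_strictConcaveOn {S : Set ℝ} {g : ℝ → ℝ} {g' x y : ℝ}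
    (hg : StrictConcaveOn ℝ S g) (hx : x ∈ S) (hy : y ∈ S) (hne : y ≠ x)
    (hg' : HasDerivAt g g' x) : g y < g x + g' * (y - x) := by
  rcases hne.lt_or_gt with hyx | hxy
  · have hslope := hg.lt_slope_of_hasDerivAt hy hx hyx hg'
    rw [slope_def_field, lt_div_iff₀ (sub_pos.2 hyx)] at hslope
    linarith
  · have hslope := hg.slope_lt_of_hasDerivAt hx hy hxy hg'
    rw [slope_def_field, div_lt_iff₀ (sub_pos.2 hxy)] at hslope
    linarith

/-- The power utility `x ↦ K x^(1-γ) / (1-γ)` with relative risk aversion `γ`. The factor `K` is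
`e^{-βt}` for the discounted utility of consumption and `f(t)^γ` for the value function. -/
noncomputable def powerUtility (γ K x : ℝ) : ℝ :=
  K * x ^ (1 - γ) / (1 - γ)

variable {γ K x : ℝ}

lemma powerUtility_eq_mul_mul_rpow_neg (hx : 0 < x) (γ K : ℝ) :
    powerUtility γ K x = x * (K * x ^ (-γ)) / (1 - γ) := by
  rw [powerUtility, sub_eq_add_neg, Real.rpow_add hx, Real.rpow_one]
  ring

lemma hasDerivAt_powerUtility (hγ1 : γ ≠ 1) (K : ℝ) (hx : x ≠ 0) :
    HasDerivAt (powerUtility γ K) (K * x ^ (-γ)) x := by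
  have h1 : 1 - γ ≠ 0 := sub_ne_zero.2 hγ1.symm
  convert! ((Real.hasDerivAt_rpow_const (p := 1 - γ) (Or.inl hx)).const_mul K).div_const
    (1 - γ) using 1
  rw [sub_sub_cancel_left]
  field_simp

lemma deriv_deriv_powerUtility (hγ1 : γ ≠ 1) (K : ℝ) (hx : x ≠ 0) :
    deriv (deriv (powerUtility γ K)) x = -γ * (K * x ^ (-γ)) / x := by
  have hderiv : deriv (powerUtility γ K) =ᶠ[nhds x] fun y => K * y ^ (-γ) := by
    filter_upwards [isOpen_ne.mem_nhds hx] with y hy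
    exact (hasDerivAt_powerUtility hγ1 K hy).deriv
  rw [hderiv.deriv_eq, ((Real.hasDerivAt_rpow_const (Or.inl hx)).const_mul K).deriv,
    Real.rpow_sub_one hx]
  ring

lemma strictConcaveOn_powerUtility (hγ : 0 < γ) (hγ1 : γ ≠ 1) (hK : 0 < K) :
    StrictConcaveOn ℝ (Set.Ioi 0) (powerUtility γ K) := by
  refine StrictAntiOn.strictConcaveOn_of_deriv (convex_Ioi 0)
    (fun x hx => (hasDerivAt_powerUtility hγ1 K (ne_of_gt hx)).continuousAt.continuousWithinAt) ?_
  rw [interior_Ioi]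
  intro x hx y hy hxy
  rw [(hasDerivAt_powerUtility hγ1 K (ne_of_gt hx)).deriv,
    (hasDerivAt_powerUtility hγ1 K (ne_of_gt hy)).deriv]
  exact mul_lt_mul_of_pos_left (Real.rpow_lt_rpow_of_neg hx hxy (neg_lt_zero.2 hγ)) hK

lemma powerUtility_sub_mul_lt (hγ : 0 < γ) (hγ1 : γ ≠ 1) {c c₀ : ℝ} (hK : 0 < K) (hc : 0 < c)
    (hc₀ : 0 < c₀) (hne : c ≠ c₀) :
    powerUtility γ K c - c * (K * c₀ ^ (-γ)) < powerUtility γ K c₀ - c₀ * (K * c₀ ^ (-γ)) := by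
  have htangent := lt_tangent_of_strictConcaveOn (strictConcaveOn_powerUtility hγ hγ1 hK) hc₀ hc
    hne (hasDerivAt_powerUtility hγ1 K hc₀.ne')
  linarith

end PowerUtility

section Hamiltonian

variable {ι κ : Type*} [Fintype ι] [DecidableEq ι] [Fintype κ]

/-- The Hamiltonian of the consumption-investment problem at wealth `w`, as a function of the
controls `(π, c)`. The scalars `p` and `q` stand for `∂_w v` and `∂_ww v`, `K` for the discount
factor `e^{-βt}`, and `m` for the vector of excess returns. -/
noncomputable def hamiltonian (γ r : ℝ) (m : κ → ℝ) (A : Matrix κ κ ℝ) (K w p q : ℝ) (π : κ → ℝ)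
    (c : ℝ) : ℝ :=
  w * p * (r + π ⬝ᵥ m) + w ^ 2 / 2 * q * (π ⬝ᵥ A *ᵥ π) - c * p + powerUtility γ K c

lemma hamiltonian_eq_meanVariance_add (γ r : ℝ) (m : κ → ℝ) (A : Matrix κ κ ℝ) (K w p : ℝ)
    (π : κ → ℝ) (c : ℝ) :
    hamiltonian γ r m A K w p (-γ * p / w) π c =
      w * p * (r + meanVariance γ m A π) + (powerUtility γ K c - c * p) := by
  rw [hamiltonian, meanVariance]
  linear_combination (-(γ / 2 * p * (π ⬝ᵥ A *ᵥ π))) * mul_self_div_self w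

variable {γ r : ℝ} {m : κ → ℝ} {A : Matrix κ κ ℝ} {e : ι → κ} {K w p c₀ : ℝ}

lemma hamiltonian_mertonPortfolio (hγ : γ ≠ 0) (hγ1 : γ ≠ 1) (he : Function.Injective e)
    (hA : (A.submatrix e e).PosDef) (hc₀ : 0 < c₀) (hp : K * c₀ ^ (-γ) = p) :
    hamiltonian γ r m A K w p (-γ * p / w) (mertonPortfolio γ m A e) c₀ =
      w * p * (r + 1 / (2 * γ) * ((m ∘ e) ⬝ᵥ (A.submatrix e e)⁻¹ *ᵥ (m ∘ e))) +
        γ / (1 - γ) * (c₀ * p) := by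
  have h1 : 1 - γ ≠ 0 := sub_ne_zero.2 hγ1.symm
  rw [hamiltonian_eq_meanVariance_add, meanVariance_mertonPortfolio hγ he hA,
    powerUtility_eq_mul_mul_rpow_neg hc₀, hp]
  field_simp
  ring

lemma hamiltonian_lt_hamiltonian_mertonPortfolio (hγ : 0 < γ) (hγ1 : γ ≠ 1)
    (he : Function.Injective e) (hA : (A.submatrix e e).PosDef) (hK : 0 < K) (hw : 0 < w)
    (hc₀ : 0 < c₀) (hp : K * c₀ ^ (-γ) = p) {π : κ → ℝ} (hπ : ∀ k ∉ Set.range e, π k = 0)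
    {c : ℝ} (hc : 0 < c) (hne : ¬(π = mertonPortfolio γ m A e ∧ c = c₀)) :
    hamiltonian γ r m A K w p (-γ * p / w) π c <
      hamiltonian γ r m A K w p (-γ * p / w) (mertonPortfolio γ m A e) c₀ := by
  subst hp
  have hwp : 0 < w * (K * c₀ ^ (-γ)) := by positivity
  rw [hamiltonian_eq_meanVariance_add, hamiltonian_eq_meanVariance_add]
  rcases eq_or_ne c c₀ with rfl | hcc
  · have hlt := meanVariance_lt_meanVariance_mertonPortfolio hγ he hA hπ fun h => hne ⟨h, rfl⟩
    gcongr
  · have hle := meanVariance_le_meanVariance_mertonPortfolio (m := m) hγ he hA hπ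
    exact add_lt_add_of_le_of_lt (by gcongr) (powerUtility_sub_mul_lt hγ hγ1 hK hc hc₀ hcc)

end Hamiltonian

section MertonFactor

/-- The function `f(·; ν)` for which `f(t; ν)^γ w^(1-γ) / (1-γ)` is the value function of the
Merton problem with horizon `T`. Only `ν ≠ β` is meaningful: at `ν = β` the quotient `γ / (ν - β)`
is `0` rather than a limit. -/
noncomputable def mertonFactor (γ β T ν t : ℝ) : ℝ :=
  Real.exp ((ν / γ) * (T - t)) + (γ / (ν - β)) * Real.exp (-(ν / γ) * t) *
    (Real.exp (((ν - β) / γ) * T) - Real.exp (((ν - β) / γ) * t))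

lemma mertonFactor_self (γ β T ν : ℝ) : mertonFactor γ β T ν T = 1 := by
  simp [mertonFactor]

lemma exp_mul_sub_exp_mul_div_nonneg (b : ℝ) {s t : ℝ} (hst : s ≤ t) :
    0 ≤ (Real.exp (b * t) - Real.exp (b * s)) / b := by
  rcases le_total 0 b with hb | hb
  · have hexp : Real.exp (b * s) ≤ Real.exp (b * t) := by gcongr
    exact div_nonneg (sub_nonneg.2 hexp) hb
  · have hexp : Real.exp (b * t) ≤ Real.exp (b * s) :=
      Real.exp_le_exp.2 (mul_le_mul_of_nonpos_left hst hb)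
    exact div_nonneg_of_nonpos (sub_nonpos.2 hexp) hb

variable {γ β T ν t w : ℝ}

lemma mertonFactor_pos (ht : t ≤ T) : 0 < mertonFactor γ β T ν t := by
  have hsplit : mertonFactor γ β T ν t = Real.exp ((ν / γ) * (T - t)) + Real.exp (-(ν / γ) * t) *
      ((Real.exp (((ν - β) / γ) * T) - Real.exp (((ν - β) / γ) * t)) / ((ν - β) / γ)) := by
    rw [mertonFactor, div_div_eq_mul_div]
    ring
  rw [hsplit]
  exact add_pos_of_pos_of_nonneg (Real.exp_pos _)
    (mul_nonneg (Real.exp_pos _).le (exp_mul_sub_exp_mul_div_nonneg _ ht))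

lemma hasDerivAt_mertonFactor (hγ : γ ≠ 0) (hνβ : ν ≠ β) (t : ℝ) :
    HasDerivAt (mertonFactor γ β T ν)
      (-(ν / γ) * mertonFactor γ β T ν t - Real.exp (-(β / γ) * t)) t := by
  have hsub : ν - β ≠ 0 := sub_ne_zero.2 hνβ
  have hexp_sub : HasDerivAt (fun s : ℝ => Real.exp ((ν / γ) * (T - s)))
      (Real.exp ((ν / γ) * (T - t)) * ((ν / γ) * (-1))) t :=
    (((hasDerivAt_id t).const_sub T).const_mul (ν / γ)).exp
  have hexp (b : ℝ) : HasDerivAt (fun s : ℝ => Real.exp (b * s)) (Real.exp (b * t) * (b * 1)) t :=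
    ((hasDerivAt_id t).const_mul b).exp
  have hprod : Real.exp (-(β / γ) * t) =
      Real.exp (-(ν / γ) * t) * Real.exp (((ν - β) / γ) * t) := by
    rw [← Real.exp_add]
    congr 1
    ring
  rw [hprod, mertonFactor]
  convert! hexp_sub.add (((hexp (-(ν / γ))).const_mul (γ / (ν - β))).mul
    ((hexp ((ν - β) / γ)).const_sub (Real.exp (((ν - β) / γ) * T)))) using 1
  field_simp
  ring

/-- The optimal consumption rate `c*` at time `t` and wealth `w`, obtained from the first-order
condition `e^{-βt} c^{-γ} = ∂_w v(t, w)`. -/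
noncomputable def mertonConsumption (γ β T ν t w : ℝ) : ℝ :=
  Real.exp (-(β / γ) * t) * w / mertonFactor γ β T ν t

lemma mertonConsumption_pos (ht : t ≤ T) (hw : 0 < w) : 0 < mertonConsumption γ β T ν t w :=
  div_pos (mul_pos (Real.exp_pos _) hw) (mertonFactor_pos ht)

lemma exp_mul_mertonConsumption_rpow_neg (hγ : γ ≠ 0) (ht : t ≤ T) (hw : 0 < w) :
    Real.exp (-β * t) * mertonConsumption γ β T ν t w ^ (-γ) =
      mertonFactor γ β T ν t ^ γ * w ^ (-γ) := by
  have hF : 0 < mertonFactor γ β T ν t := mertonFactor_pos ht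
  have hexp : Real.exp (-β * t) * Real.exp (-(β / γ) * t * -γ) = 1 := by
    rw [← Real.exp_add, Real.exp_eq_one_iff]
    field_simp
    ring
  rw [mertonConsumption, Real.div_rpow (by positivity) hF.le,
    Real.mul_rpow (Real.exp_pos _).le hw.le, ← Real.exp_mul, Real.rpow_neg hF.le, div_inv_eq_mul]
  linear_combination (mertonFactor γ β T ν t ^ γ * w ^ (-γ)) * hexp

lemma deriv_powerUtility_mertonFactor (hγ : γ ≠ 0) (hνβ : ν ≠ β) (ht : t ≤ T) (hw : 0 < w) :
    deriv (fun s => powerUtility γ (mertonFactor γ β T ν s ^ γ) w) t =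
      -(w * (mertonFactor γ β T ν t ^ γ * w ^ (-γ)) * (ν / (1 - γ)) + γ / (1 - γ) *
        (mertonConsumption γ β T ν t w * (mertonFactor γ β T ν t ^ γ * w ^ (-γ)))) := by
  have hF : mertonFactor γ β T ν t ≠ 0 := (mertonFactor_pos ht).ne'
  have hderiv := (((hasDerivAt_mertonFactor (T := T) hγ hνβ t).rpow_const
    (p := γ) (Or.inl hF)).mul_const (w * w ^ (-γ))).div_const (1 - γ)
  simp only [powerUtility_eq_mul_mul_rpow_neg hw, mul_left_comm w]
  rw [hderiv.deriv, Real.rpow_sub_one hF, mertonConsumption]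
  field_simp
  ring

end MertonFactor

section RankEmb

variable {d n N : ℕ}

lemma val_add_one_sub_lt {k : Fin d} (hk : n ≤ k.val + 1 ∧ k.val + 1 ≤ N) :
    k.val + 1 - n < N - n + 1 := by
  omega

variable (hn : 1 ≤ n) (hnN : n ≤ N) (hNd : N ≤ d)

lemma rankEmb_injective : Function.Injective (rankEmb d n N hn hnN hNd) := by
  intro i j hij
  simp only [rankEmb, Fin.mk.injEq] at hij
  exact Fin.ext (by omega)

lemma mem_range_rankEmb_iff {k : Fin d} :
    k ∈ Set.range (rankEmb d n N hn hnN hNd) ↔ n ≤ k.val + 1 ∧ k.val + 1 ≤ N := by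
  constructor
  · rintro ⟨j, rfl⟩
    have := j.isLt
    simp only [rankEmb]
    omega
  · intro hk
    exact ⟨⟨k.val + 1 - n, val_add_one_sub_lt hk⟩, Fin.ext (by simp only [rankEmb]; omega)⟩

lemma extend_rankEmb_zero {α : Type*} [Zero α] (x : Fin (N - n + 1) → α) :
    Function.extend (rankEmb d n N hn hnN hNd) x 0 = fun k : Fin d =>
      if h : n ≤ k.val + 1 ∧ k.val + 1 ≤ N then x ⟨k.val + 1 - n, val_add_one_sub_lt h⟩ else 0 := by
  refine (eq_extend_zero (rankEmb_injective hn hnN hNd) (funext fun j => ?_) fun k hk => ?_).symm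
  · have hindex : (rankEmb d n N hn hnN hNd j).val + 1 - n = j := by
      simp only [rankEmb]
      omega
    simp only [Function.comp_apply, dif_pos ((mem_range_rankEmb_iff hn hnN hNd).1 ⟨j, rfl⟩), hindex,
      Fin.eta]
  · exact dif_neg (mt (mem_range_rankEmb_iff hn hnN hNd).2 hk)

end RankEmb

theorem stmt8_general {ι κ : Type*} [Fintype ι] [DecidableEq ι] [Fintype κ] {γ β T r ν : ℝ}
    (hγ : 0 < γ) (hγ1 : γ ≠ 1) (m : κ → ℝ) (A : Matrix κ κ ℝ) {e : ι → κ}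
    (he : Function.Injective e) (hA : (A.submatrix e e).PosDef)
    (hν : ν = (1 - γ) * (r + 1 / (2 * γ) * ((m ∘ e) ⬝ᵥ (A.submatrix e e)⁻¹ *ᵥ (m ∘ e))))
    (hνβ : ν ≠ β) {f : ℝ → ℝ} (hf : ∀ t, f t = mertonFactor γ β T ν t)
    {v : ℝ → ℝ → ℝ} (hv : ∀ t w, v t w = powerUtility γ (f t ^ γ) w)
    {H : ℝ → ℝ → (κ → ℝ) → ℝ → ℝ}
    (hH : ∀ t w π c, H t w π c =
      hamiltonian γ r m A (Real.exp (-β * t)) w (deriv (v t) w) (deriv (deriv (v t)) w) π c)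
    {πs : κ → ℝ} (hπs : πs = mertonPortfolio γ m A e)
    {cs : ℝ → ℝ → ℝ} (hcs : ∀ t w, cs t w = Real.exp (-(β / γ) * t) * w / f t) :
    (∀ w, v T w = w ^ (1 - γ) / (1 - γ)) ∧
    ∀ t ≤ T, ∀ w, 0 < w →
      (0 = deriv (fun s => v s w) t + H t w πs (cs t w)) ∧
      ((∀ k ∉ Set.range e, πs k = 0) ∧ 0 < cs t w) ∧
      (∀ π : κ → ℝ, (∀ k ∉ Set.range e, π k = 0) → ∀ c, 0 < c →
        H t w π c ≤ H t w πs (cs t w)) ∧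
      (∀ π : κ → ℝ, (∀ k ∉ Set.range e, π k = 0) → ∀ c, 0 < c →
        H t w π c = H t w πs (cs t w) → π = πs ∧ c = cs t w) := by
  obtain rfl : f = mertonFactor γ β T ν := funext hf
  obtain rfl : v = fun t => powerUtility γ (mertonFactor γ β T ν t ^ γ) := funext₂ hv
  obtain rfl : cs = mertonConsumption γ β T ν := funext₂ hcs
  subst hπs
  refine ⟨fun w => by simp [powerUtility, mertonFactor_self], fun t ht w hw => ?_⟩
  have hc₀ := mertonConsumption_pos (γ := γ) (β := β) (ν := ν) ht hw
  have hslope := exp_mul_mertonConsumption_rpow_neg (β := β) (ν := ν) hγ.ne' ht hw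
  simp only [hH, (hasDerivAt_powerUtility hγ1 _ hw.ne').deriv,
    deriv_deriv_powerUtility hγ1 _ hw.ne']
  have hlt {π : κ → ℝ} (hπ : ∀ k ∉ Set.range e, π k = 0) {c : ℝ} (hc : 0 < c) :=
    hamiltonian_lt_hamiltonian_mertonPortfolio (r := r) (m := m) hγ hγ1 he hA (Real.exp_pos _) hw
      hc₀ hslope hπ hc
  refine ⟨?_, ⟨fun _ => mertonPortfolio_apply_of_notMem_range, hc₀⟩, fun π hπ c hc => ?_,
    fun π hπ c hc heq => by_contra fun hne => (hlt hπ hc hne).ne heq⟩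
  · have hν' := eq_div_of_mul_eq (sub_ne_zero.2 hγ1.symm) ((mul_comm _ _).trans hν.symm)
    rw [deriv_powerUtility_mertonFactor hγ.ne' hνβ ht hw,
      hamiltonian_mertonPortfolio hγ.ne' hγ1 he hA hc₀ hslope, hν', neg_add_cancel]
  · by_cases heq : π = mertonPortfolio γ m A e ∧ c = mertonConsumption γ β T ν t w
    · rw [heq.1, heq.2]
    · exact (hlt hπ hc heq).le

/-- HJB under open market constraints in a first-order model.
With `μ̃_{[n:N]}`, `ã_{[n:N]}` the truncated drift vector and covariance matrix,
`ν_{[n:N]} = (1−γ)(r + (1/(2γ))(μ̃_{[n:N]}−r𝟙)ᵀ(ã_{[n:N]})⁻¹(μ̃_{[n:N]}−r𝟙)) ≠ β`, and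
`v(t,w) = f(t;ν_{[n:N]})^γ·w^(1−γ)/(1−γ)`, one has `v(T,w) = w^(1−γ)/(1−γ)` and, for
`(t,w) ∈ [0,T)×(0,∞)`, `0 = ∂ₜv + sup H(π,c)` where the supremum runs over `c ∈ (0,∞)`
and `π ∈ ℝ^d` with `π_k = 0` for ranks `k ∉ {n,…,N}`; it is attained at the unique
maximizer `π*` supported on ranks `n,…,N` given by the truncated Merton fraction
`(1/γ)(ã_{[n:N]})⁻¹(μ̃_{[n:N]}−r𝟙)`, together with `c* = e^{−(β/γ)t}·w/f(t;ν_{[n:N]})`. -/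
theorem stmt8 (γ β T : ℝ) (hγ : 0 < γ) (hγ1 : γ ≠ 1) (hβ : 0 < β) (hT : 0 < T)
    (d : ℕ) (hd : 1 ≤ d) (r : ℝ) (μ : Fin d → ℝ) (a : Matrix (Fin d) (Fin d) ℝ)
    (ha : a.PosDef)
    (n N : ℕ) (hn : 1 ≤ n) (hnN : n ≤ N) (hNd : N ≤ d)
    (aS : Matrix (Fin (N - n + 1)) (Fin (N - n + 1)) ℝ)
    (haS : aS = a.submatrix (rankEmb d n N hn hnN hNd) (rankEmb d n N hn hnN hNd))
    (μS : Fin (N - n + 1) → ℝ) (hμS : μS = μ ∘ rankEmb d n N hn hnN hNd)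
    (ν : ℝ)
    (hν : ν = (1 - γ) * (r + 1 / (2 * γ) *
      ((fun j => μS j - r) ⬝ᵥ aS⁻¹.mulVec (fun j => μS j - r))))
    (hνβ : ν ≠ β)
    (f : ℝ → ℝ)
    (hf : ∀ t : ℝ, f t =
      Real.exp ((ν / γ) * (T - t)) +
        (γ / (ν - β)) * Real.exp (-(ν / γ) * t) *
          (Real.exp (((ν - β) / γ) * T) - Real.exp (((ν - β) / γ) * t)))
    (v : ℝ → ℝ → ℝ)
    (hv : ∀ t w : ℝ, v t w = f t ^ γ * w ^ (1 - γ) / (1 - γ))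
    (H : ℝ → ℝ → (Fin d → ℝ) → ℝ → ℝ)
    (hH : ∀ t w : ℝ, ∀ π : Fin d → ℝ, ∀ c : ℝ, H t w π c =
      w * deriv (v t) w * (r + π ⬝ᵥ (fun i => μ i - r))
        + w ^ 2 / 2 * deriv (deriv (v t)) w * (π ⬝ᵥ a.mulVec π)
        - c * deriv (v t) w + Real.exp (-β * t) * c ^ (1 - γ) / (1 - γ))
    (πs : Fin d → ℝ)
    (hπs : πs = fun k : Fin d =>
      if h : n ≤ k.val + 1 ∧ k.val + 1 ≤ N then
        (1 / γ) * aS⁻¹.mulVec (fun j => μS j - r) ⟨k.val + 1 - n, by omega⟩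
      else 0)
    (cs : ℝ → ℝ → ℝ) (hcs : ∀ t w : ℝ, cs t w = Real.exp (-(β / γ) * t) * w / f t) :
    (∀ w : ℝ, 0 < w → v T w = w ^ (1 - γ) / (1 - γ)) ∧
    ∀ t ∈ Set.Ico 0 T, ∀ w : ℝ, 0 < w →
      (0 = deriv (fun s => v s w) t + H t w πs (cs t w)) ∧
      ((∀ k : Fin d, ¬(n ≤ k.val + 1 ∧ k.val + 1 ≤ N) → πs k = 0) ∧ 0 < cs t w) ∧
      (∀ π : Fin d → ℝ, (∀ k : Fin d, ¬(n ≤ k.val + 1 ∧ k.val + 1 ≤ N) → π k = 0) →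
        ∀ c : ℝ, 0 < c → H t w π c ≤ H t w πs (cs t w)) ∧
      (∀ π : Fin d → ℝ, (∀ k : Fin d, ¬(n ≤ k.val + 1 ∧ k.val + 1 ≤ N) → π k = 0) →
        ∀ c : ℝ, 0 < c →
          H t w π c = H t w πs (cs t w) → π = πs ∧ c = cs t w) := by
  subst haS hμS
  have he := rankEmb_injective hn hnN hNd
  have hportfolio : πs = mertonPortfolio γ (fun i => μ i - r) a (rankEmb d n N hn hnN hNd) := by
    rw [hπs, mertonPortfolio, extend_rankEmb_zero]
    rfl
  have hgeneral := stmt8_general hγ hγ1 (fun i => μ i - r) a he (ha.submatrix he) hν hνβ hf hv hH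
    hportfolio hcs
  simp only [mem_range_rankEmb_iff] at hgeneral
  exact ⟨fun w _ => hgeneral.1 w, fun t ht => hgeneral.2 t ht.2.le⟩
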